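/- For any θ > 0 and positive integers K' < K, let G be N×K and G' be N×K' with i.i.d. standard complex Gaussian entries. Then E[log det(I_N + (θ/K) G G†)] ≥ E[log det(I_N + (θ/K') G' G'†)]. -/

import Mathlib

open MeasureTheory ProbabilityTheory Matrix

/-- Matrices over a measurable space are measurable via the (defeq) pi structure. -/
instance matrixMeasurableSpace {m n α : Type*} [MeasurableSpace α] :
    MeasurableSpace (Matrix m n α) :=
  inferInstanceAs (MeasurableSpace (m → n → α))

/-- The law of an `N × K` random complex matrix with i.i.d. `CN(0, v)` entries. -/
noncomputable def complexGaussianMatrix (N K : ℕ) (v : NNReal) :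
    Measure (Matrix (Fin N) (Fin K) ℂ) :=
  (Measure.pi fun _ : Fin N × Fin K × Bool => gaussianReal 0 (v / 2)).map
    (fun f => Matrix.of fun i j =>
      (f (i, j, false) : ℂ) + (f (i, j, true) : ℂ) * Complex.I)

/-!
The expected rate `x ↦ E[log det (1 + G diag(x) Gᴴ)]` is concave on the nonnegative orthant because
`log det` is concave on positive definite matrices, and it is symmetric in the entries of `x`
because the columns of `G` are exchangeable. By Birkhoff's theorem a concave symmetric function does
not decrease when a doubly stochastic matrix is applied to its argument. Using only `K'` of the `K`
columns amounts to the power vector `(θ/K', …, θ/K', 0, …, 0)`, which the doubly stochastic matrix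
with all entries `1/K` maps to `(θ/K, …, θ/K)`.
-/

section LogDet

open scoped ComplexOrder

variable {n 𝕜 : Type*} [RCLike 𝕜]

lemma convex_setOf_posDef : Convex ℝ {A : Matrix n n 𝕜 | A.PosDef} :=
  convex_iff_forall_pos.mpr fun _ hA _ hB _ _ ha hb _ => (hA.smul ha).add (hB.smul hb)

variable [Fintype n] [DecidableEq n] {A B : Matrix n n 𝕜}

/-- The logarithm of the determinant, meant for Hermitian matrices, whose determinant is real;
like `Real.log`, it takes junk values when that determinant is not positive. -/
noncomputable def logDet (A : Matrix n n 𝕜) : ℝ :=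
  Real.log (RCLike.re A.det)

lemma logDet_eq_log_norm_det (hA : A.PosSemidef) : logDet A = Real.log ‖A.det‖ := by
  rw [logDet, ← congrArg RCLike.re (RCLike.norm_of_nonneg' hA.det_nonneg), RCLike.ofReal_re]

lemma logDet_eq_sum_log_eigenvalues (hA : A.PosDef) :
    logDet A = ∑ i, Real.log (hA.isHermitian.eigenvalues i) := by
  rw [logDet, hA.isHermitian.det_eq_prod_eigenvalues, ← RCLike.ofReal_prod, RCLike.ofReal_re,
    Real.log_prod fun i _ => (hA.eigenvalues_pos i).ne']

lemma det_one_add_eq_prod_eigenvalues (hA : A.IsHermitian) :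
    (1 + A).det = ∏ i, (1 + (hA.eigenvalues i : 𝕜)) := by
  have hcharpoly := congrArg (Polynomial.eval (-1)) hA.charpoly_eq
  have hneg : scalar n (-1 : 𝕜) - A = -(1 + A) := by
    rw [map_neg, map_one]; abel
  have hprod : ∏ i, (-1 - (hA.eigenvalues i : 𝕜))
      = (-1) ^ Fintype.card n * ∏ i, (1 + (hA.eigenvalues i : 𝕜)) := by
    simp_rw [← Finset.card_univ, ← Finset.prod_neg, neg_add, sub_eq_add_neg]
  simp only [eval_charpoly, hneg, det_neg, Polynomial.eval_prod, Polynomial.eval_sub,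
    Polynomial.eval_X, Polynomial.eval_C, hprod] at hcharpoly
  exact mul_left_cancel₀ (pow_ne_zero _ (neg_ne_zero.mpr one_ne_zero)) hcharpoly

lemma logDet_one_add_nonneg (hA : A.PosSemidef) : 0 ≤ logDet (1 + A) := by
  rw [logDet, det_one_add_eq_prod_eigenvalues hA.isHermitian]
  refine Real.log_nonneg ?_
  exact_mod_cast Finset.one_le_prod fun i _ => le_add_of_nonneg_right (hA.eigenvalues_nonneg i)

lemma logDet_le_re_trace_sub_card (hA : A.PosDef) :
    logDet A ≤ RCLike.re A.trace - Fintype.card n := by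
  calc logDet A = ∑ i, Real.log (hA.isHermitian.eigenvalues i) := logDet_eq_sum_log_eigenvalues hA
    _ ≤ ∑ i, (hA.isHermitian.eigenvalues i - 1) :=
      Finset.sum_le_sum fun i _ => Real.log_le_sub_one_of_pos (hA.eigenvalues_pos i)
    _ = RCLike.re A.trace - Fintype.card n := by
      simp [hA.isHermitian.trace_eq_sum_eigenvalues]

open scoped MatrixOrder in
/-- The right-hand side is the tangent of `logDet` at `A`. -/
lemma logDet_le_add_re_trace_inv_mul (hA : A.PosDef) (hB : B.PosDef) :
    logDet B ≤ logDet A + (RCLike.re (A⁻¹ * B).trace - Fintype.card n) := by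
  -- Factoring `A⁻¹ = Qᴴ * Q` reduces to the tangent at `1`, applied to the congruent `Q * B * Qᴴ`.
  obtain ⟨Q, hQ⟩ : ∃ Q, A⁻¹ = Qᴴ * Q :=
    CStarAlgebra.nonneg_iff_eq_star_mul_self.mp (nonneg_iff_posSemidef.mpr hA.inv.posSemidef)
  have hdet : (Q * B * Qᴴ).det = A.det⁻¹ * B.det := by
    rw [← Ring.inverse_eq_inv', ← det_nonsing_inv, hQ]
    simp only [det_mul]
    ring
  have htrace : (Q * B * Qᴴ).trace = (A⁻¹ * B).trace := by
    rw [hQ, trace_mul_comm, ← Matrix.mul_assoc]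
  have hpsd : (Q * B * Qᴴ).PosSemidef := hB.posSemidef.mul_mul_conjTranspose_same Q
  have hpd : (Q * B * Qᴴ).PosDef := by
    rw [hpsd.posDef_iff_det_ne_zero, hdet]
    exact mul_ne_zero (inv_ne_zero hA.det_pos.ne') hB.det_pos.ne'
  have hlog : logDet (Q * B * Qᴴ) = logDet B - logDet A := by
    rw [logDet_eq_log_norm_det hpsd, logDet_eq_log_norm_det hA.posSemidef,
      logDet_eq_log_norm_det hB.posSemidef, hdet, inv_mul_eq_div, norm_div,
      Real.log_div (norm_ne_zero_iff.mpr hB.det_pos.ne') (norm_ne_zero_iff.mpr hA.det_pos.ne')]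
  have hle := logDet_le_re_trace_sub_card hpd
  rw [hlog, htrace] at hle
  linarith

theorem concaveOn_logDet : ConcaveOn ℝ {A : Matrix n n 𝕜 | A.PosDef} logDet := by
  refine ⟨convex_setOf_posDef, fun A hA B hB a b ha hb hab => ?_⟩
  set C := a • A + b • B
  have hC : C.PosDef := convex_setOf_posDef hA hB ha hb hab
  have htrace : a * RCLike.re (C⁻¹ * A).trace + b * RCLike.re (C⁻¹ * B).trace
      = Fintype.card n := by
    rw [← RCLike.smul_re, ← RCLike.smul_re, ← map_add, ← trace_smul, ← trace_smul, ← trace_add,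
      ← Matrix.mul_smul, ← Matrix.mul_smul, ← Matrix.mul_add,
      nonsing_inv_mul _ hC.det_pos.ne'.isUnit, trace_one, RCLike.natCast_re]
  have hAC := mul_le_mul_of_nonneg_left (logDet_le_add_re_trace_inv_mul hC hA) ha
  have hBC := mul_le_mul_of_nonneg_left (logDet_le_add_re_trace_inv_mul hC hB) hb
  simp only [smul_eq_mul]
  linear_combination hAC + hBC + htrace + (logDet C - Fintype.card n) * hab

end LogDet

section Symmetric

variable {κ : Type*} [Fintype κ] [DecidableEq κ]

lemma le_map_mulVec_of_mem_doublyStochastic {s : Set (κ → ℝ)} {f : (κ → ℝ) → ℝ}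
    (hf : ConcaveOn ℝ s f) {x : κ → ℝ} (hxs : ∀ σ : Equiv.Perm κ, x ∘ σ ∈ s)
    (hfx : ∀ σ : Equiv.Perm κ, f (x ∘ σ) = f x) {M : Matrix κ κ ℝ}
    (hM : M ∈ doublyStochastic ℝ κ) : f x ≤ f (M *ᵥ x) := by
  have hconvex : Convex ℝ {M : Matrix κ κ ℝ | M *ᵥ x ∈ {y ∈ s | f x ≤ f y}} :=
    (hf.convex_ge (f x)).linear_preimage ((mulVecBilin ℝ ℝ).flip x)
  have hperm : {σ.permMatrix ℝ | σ : Equiv.Perm κ} ⊆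
      {M : Matrix κ κ ℝ | M *ᵥ x ∈ {y ∈ s | f x ≤ f y}} := by
    rintro _ ⟨σ, rfl⟩
    rw [Set.mem_ofPred_eq, permMatrix_mulVec]
    exact ⟨hxs σ, (hfx σ).ge⟩
  rw [← SetLike.mem_coe, doublyStochastic_eq_convexHull_permMatrix] at hM
  exact (convexHull_min hperm hconvex hM).2

lemma inv_card_mem_doublyStochastic [Nonempty κ] :
    (of fun _ _ => (Fintype.card κ : ℝ)⁻¹) ∈ doublyStochastic ℝ κ := by
  simp [mem_doublyStochastic_iff_sum]

end Symmetric

section SumRate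

open scoped ComplexOrder

variable {ι κ κ' 𝕜 : Type*} [Fintype κ] [DecidableEq κ] [Fintype κ'] [DecidableEq κ'] [RCLike 𝕜]
  {x : κ → ℝ}

lemma posSemidef_mul_diagonal_mul_conjTranspose [Finite ι] (hx : 0 ≤ x) (G : Matrix ι κ 𝕜) :
    (G * diagonal (fun k => (x k : 𝕜)) * Gᴴ).PosSemidef :=
  (PosSemidef.diagonal fun k => RCLike.ofReal_nonneg.mpr (hx k)).mul_mul_conjTranspose_same G

variable [DecidableEq ι]

lemma posDef_one_add_mul_diagonal_mul_conjTranspose [Finite ι] (hx : 0 ≤ x) (G : Matrix ι κ 𝕜) :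
    (1 + G * diagonal (fun k => (x k : 𝕜)) * Gᴴ).PosDef :=
  PosDef.one.add_posSemidef (posSemidef_mul_diagonal_mul_conjTranspose hx G)

variable [Fintype ι]

/-- The sum rate `log det (1 + G diag(x) Gᴴ)` of the channel with gain matrix `G` when user `k`,
whose gains form the column `k` of `G`, transmits with power `x k`. -/
noncomputable def sumRate (x : κ → ℝ) (G : Matrix ι κ 𝕜) : ℝ :=
  logDet (1 + G * diagonal (fun k => (x k : 𝕜)) * Gᴴ)

lemma sumRate_const (c : ℝ) (G : Matrix ι κ 𝕜) :
    sumRate (fun _ => c) G = logDet (1 + (c : 𝕜) • (G * Gᴴ)) := by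
  rw [sumRate, ← smul_one_eq_diagonal, Matrix.mul_smul, Matrix.mul_one, Matrix.smul_mul]

lemma sumRate_submatrix {e : κ' → κ} (he : e.Injective) (y : κ' → ℝ) (G : Matrix ι κ 𝕜) :
    sumRate y (G.submatrix id e) = sumRate (Function.extend e y 0) G := by
  unfold sumRate
  congr 2
  ext i j
  rw [mul_apply, mul_apply]
  simp only [mul_diagonal, conjTranspose_apply, submatrix_apply, id_eq]
  refine Fintype.sum_of_injective e he _ _ (fun k hk => ?_) fun k => ?_
  · rw [Function.extend_apply' _ _ _ hk]
    simp
  · rw [he.extend_apply]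

lemma sumRate_nonneg (hx : 0 ≤ x) (G : Matrix ι κ 𝕜) : 0 ≤ sumRate x G :=
  logDet_one_add_nonneg (posSemidef_mul_diagonal_mul_conjTranspose hx G)

lemma sumRate_le_sum_mul_norm_sq (hx : 0 ≤ x) (G : Matrix ι κ 𝕜) :
    sumRate x G ≤ ∑ i, ∑ k, x k * ‖G i k‖ ^ 2 := by
  have htrace : RCLike.re (G * diagonal (fun k => (x k : 𝕜)) * Gᴴ).trace
      = ∑ i, ∑ k, x k * ‖G i k‖ ^ 2 := by
    rw [trace, map_sum]
    refine Finset.sum_congr rfl fun i _ => ?_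
    rw [diag_apply, mul_apply, map_sum]
    refine Finset.sum_congr rfl fun k _ => ?_
    rw [mul_diagonal, conjTranspose_apply, mul_right_comm, RCLike.star_def, RCLike.mul_conj,
      mul_comm, RCLike.re_ofReal_mul]
    norm_cast
  have hle := logDet_le_re_trace_sub_card (posDef_one_add_mul_diagonal_mul_conjTranspose hx G)
  rwa [trace_add, trace_one, map_add, RCLike.natCast_re, add_sub_cancel_left, htrace] at hle

lemma concaveOn_sumRate (G : Matrix ι κ 𝕜) :
    ConcaveOn ℝ (Set.Ici 0) fun x : κ → ℝ => sumRate x G := by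
  refine ⟨convex_Ici 0, fun x hx y hy a b ha hb hab => ?_⟩
  have hmix : 1 + G * diagonal (fun k => ((a • x + b • y) k : 𝕜)) * Gᴴ
      = a • (1 + G * diagonal (fun k => (x k : 𝕜)) * Gᴴ)
        + b • (1 + G * diagonal (fun k => (y k : 𝕜)) * Gᴴ) := by
    have hdiag : diagonal (fun k => ((a • x + b • y) k : 𝕜))
        = a • diagonal (fun k => (x k : 𝕜)) + b • diagonal (fun k => (y k : 𝕜)) := by
      ext i j
      rcases eq_or_ne i j with rfl | hij <;> simp [RCLike.real_smul_eq_coe_mul, *]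
    rw [hdiag, Matrix.mul_add, Matrix.add_mul, Matrix.mul_smul, Matrix.mul_smul,
      Matrix.smul_mul, Matrix.smul_mul, smul_add, smul_add, add_add_add_comm, ← add_smul, hab,
      one_smul]
  simp only [sumRate]
  rw [hmix]
  exact concaveOn_logDet.2 (posDef_one_add_mul_diagonal_mul_conjTranspose hx G)
    (posDef_one_add_mul_diagonal_mul_conjTranspose hy G) ha hb hab

end SumRate

section ErgodicSumRate

instance matrixBorelSpace {m n α : Type*} [Countable m] [Countable n] [TopologicalSpace α]
    [SecondCountableTopology α] [MeasurableSpace α] [BorelSpace α] : BorelSpace (Matrix m n α) :=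
  inferInstanceAs (BorelSpace (m → n → α))

variable {ι κ κ' 𝕜 : Type*} [Fintype ι] [DecidableEq ι] [Fintype κ] [DecidableEq κ]
  [Fintype κ'] [DecidableEq κ'] [RCLike 𝕜]
  {μ : Measure (Matrix ι κ 𝕜)} {ν : Measure (Matrix ι κ' 𝕜)} {x : κ → ℝ}

lemma measurable_sumRate (x : κ → ℝ) : Measurable (sumRate x : Matrix ι κ 𝕜 → ℝ) := by
  have hcont : Continuous fun G : Matrix ι κ 𝕜 =>
      RCLike.re (1 + G * diagonal (fun k => (x k : 𝕜)) * Gᴴ).det := by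
    fun_prop
  exact Real.measurable_log.comp hcont.measurable

lemma integrable_sumRate (hμ : ∀ i k, Integrable (fun G => ‖G i k‖ ^ 2) μ) (hx : 0 ≤ x) :
    Integrable (sumRate x) μ := by
  have hbound : Integrable (fun G => ∑ i, ∑ k, x k * ‖G i k‖ ^ 2) μ :=
    integrable_finsetSum _ fun i _ => integrable_finsetSum _ fun k _ => (hμ i k).const_mul (x k)
  refine hbound.mono' (measurable_sumRate x).aestronglyMeasurable (ae_of_all _ fun G => ?_)
  rw [Real.norm_of_nonneg (sumRate_nonneg hx G)]
  exact sumRate_le_sum_mul_norm_sq hx G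

/-- The expected sum rate when the channel matrix has law `μ`. -/
noncomputable def ergodicSumRate (μ : Measure (Matrix ι κ 𝕜)) (x : κ → ℝ) : ℝ :=
  ∫ G, sumRate x G ∂μ

/-- Exchangeability of the columns of a random matrix with law `μ`: permuting them does not change
the law. -/
def HasExchangeableColumns (μ : Measure (Matrix ι κ 𝕜)) : Prop :=
  ∀ σ : Equiv.Perm κ, MeasurePreserving (fun G => G.submatrix id σ) μ μ

lemma concaveOn_ergodicSumRate (hμ : ∀ i k, Integrable (fun G => ‖G i k‖ ^ 2) μ) :
    ConcaveOn ℝ (Set.Ici 0) (ergodicSumRate μ) := by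
  refine ⟨convex_Ici 0, fun x hx y hy a b ha hb hab => ?_⟩
  have hint {z : κ → ℝ} (hz : z ∈ Set.Ici 0) : Integrable (sumRate z) μ := integrable_sumRate hμ hz
  simp only [ergodicSumRate, smul_eq_mul, ← integral_const_mul]
  rw [← integral_add ((hint hx).const_mul a) ((hint hy).const_mul b)]
  exact integral_mono (((hint hx).const_mul a).add ((hint hy).const_mul b))
    (hint (convex_Ici 0 hx hy ha hb hab)) fun G => (concaveOn_sumRate G).2 hx hy ha hb hab

lemma ergodicSumRate_extend {e : κ' → κ} (he : e.Injective)
    (hμν : MeasurePreserving (fun G => G.submatrix id e) μ ν) (y : κ' → ℝ) :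
    ergodicSumRate μ (Function.extend e y 0) = ergodicSumRate ν y := by
  rw [ergodicSumRate, ergodicSumRate, ← hμν.map_eq, integral_map hμν.measurable.aemeasurable
    (measurable_sumRate y).aestronglyMeasurable]
  exact integral_congr_ae (ae_of_all _ fun G => (sumRate_submatrix he y G).symm)

lemma HasExchangeableColumns.ergodicSumRate_comp_perm (hμ : HasExchangeableColumns μ) (x : κ → ℝ)
    (σ : Equiv.Perm κ) : ergodicSumRate μ (x ∘ σ) = ergodicSumRate μ x := by
  have hextend : Function.extend σ (x ∘ σ) 0 = x :=
    funext <| σ.surjective.forall.mpr fun k => σ.injective.extend_apply (x ∘ σ) 0 k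
  rw [← ergodicSumRate_extend σ.injective (hμ σ), hextend]

theorem HasExchangeableColumns.ergodicSumRate_le_mulVec (hμ : HasExchangeableColumns μ)
    (hsq : ∀ i k, Integrable (fun G => ‖G i k‖ ^ 2) μ) (hx : 0 ≤ x) {M : Matrix κ κ ℝ}
    (hM : M ∈ doublyStochastic ℝ κ) : ergodicSumRate μ x ≤ ergodicSumRate μ (M *ᵥ x) :=
  le_map_mulVec_of_mem_doublyStochastic (concaveOn_ergodicSumRate hsq) (fun σ k => hx (σ k))
    (hμ.ergodicSumRate_comp_perm x) hM

lemma HasExchangeableColumns.ergodicSumRate_le_mean [Nonempty κ] (hμ : HasExchangeableColumns μ)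
    (hsq : ∀ i k, Integrable (fun G => ‖G i k‖ ^ 2) μ) (hx : 0 ≤ x) :
    ergodicSumRate μ x ≤ ergodicSumRate μ fun _ => (∑ k, x k) / Fintype.card κ := by
  convert hμ.ergodicSumRate_le_mulVec hsq hx inv_card_mem_doublyStochastic using 2
  ext k
  simp [mulVec, dotProduct, ← Finset.mul_sum, div_eq_inv_mul]

end ErgodicSumRate

theorem expected_logdet_monotone_in_users_general {ι κ κ' 𝕜 : Type*} [Fintype ι] [DecidableEq ι]
    [Fintype κ] [Fintype κ'] [Nonempty κ'] [RCLike 𝕜]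
    {μ : Measure (Matrix ι κ 𝕜)} {ν : Measure (Matrix ι κ' 𝕜)} (hμ : HasExchangeableColumns μ)
    (hsq : ∀ i k, Integrable (fun G => ‖G i k‖ ^ 2) μ) {e : κ' → κ} (he : e.Injective)
    (hμν : MeasurePreserving (fun G => G.submatrix id e) μ ν) {θ : ℝ} (hθ : 0 ≤ θ) :
    ∫ G', Real.log (RCLike.re (1 + ((θ / Fintype.card κ' : ℝ) : 𝕜) • (G' * G'ᴴ)).det) ∂ν ≤
      ∫ G, Real.log (RCLike.re (1 + ((θ / Fintype.card κ : ℝ) : 𝕜) • (G * Gᴴ)).det) ∂μ := by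
  classical
  have : Nonempty κ := ‹Nonempty κ'›.map e
  set y : κ' → ℝ := fun _ => θ / Fintype.card κ'
  have hnonneg : 0 ≤ Function.extend e y 0 :=
    Function.extend_nonneg (fun _ => by positivity) le_rfl
  have hsum : ∑ k, Function.extend e y 0 k = θ := by
    rw [← Fintype.sum_of_injective e he y (Function.extend e y 0)
      (fun k hk => Function.extend_apply' _ _ _ hk) fun k => (he.extend_apply y 0 k).symm]
    simp [y, mul_div_cancel₀]
  have hle := hμ.ergodicSumRate_le_mean hsq hnonneg
  rw [ergodicSumRate_extend he hμν, hsum] at hle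
  simpa only [ergodicSumRate, sumRate_const, logDet, y] using hle

section Gaussian

lemma measurePreserving_pi_comp_injective {ι ι' : Type*} [Fintype ι] [Fintype ι'] {X : ι → Type*}
    [∀ i, MeasurableSpace (X i)] (μ : ∀ i, Measure (X i)) [∀ i, IsProbabilityMeasure (μ i)]
    {e : ι' → ι} (he : e.Injective) :
    MeasurePreserving (fun f i => f (e i)) (Measure.pi μ) (Measure.pi fun i => μ (e i)) := by
  have hindep : iIndepFun (fun i (f : ∀ i, X i) => f (e i)) (Measure.pi μ) :=
    (iIndepFun_pi (X := fun _ => id) fun _ => aemeasurable_id).precomp he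
  refine ⟨by fun_prop, ?_⟩
  rw [(iIndepFun_iff_map_fun_eq_pi_map fun i =>
    (measurable_pi_apply (e i)).aemeasurable).mp hindep]
  congr with i : 1
  exact (measurePreserving_eval μ (e i)).map_eq

variable {N K K' : ℕ} (v : NNReal)

lemma measurable_matrix_of_re_im : Measurable fun f : Fin N × Fin K × Bool → ℝ =>
    of fun i j => (f (i, j, false) : ℂ) + (f (i, j, true) : ℂ) * Complex.I := by
  have hcont : Continuous fun f : Fin N × Fin K × Bool → ℝ =>
      of fun i j => (f (i, j, false) : ℂ) + (f (i, j, true) : ℂ) * Complex.I := by fun_prop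
  exact hcont.measurable

lemma measurePreserving_submatrix_complexGaussianMatrix {e : Fin K' → Fin K} (he : e.Injective) :
    MeasurePreserving (fun G => G.submatrix id e)
      (complexGaussianMatrix N K v) (complexGaussianMatrix N K' v) := by
  have hmeas : Measurable fun G : Matrix (Fin N) (Fin K) ℂ => G.submatrix id e :=
    (continuous_id.matrix_submatrix id e).measurable
  have hcoord := measurePreserving_pi_comp_injective
    (fun _ : Fin N × Fin K × Bool => gaussianReal 0 (v / 2))
    (Function.injective_id.prodMap (he.prodMap (Function.injective_id (α := Bool))))
  refine ⟨hmeas, ?_⟩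
  rw [complexGaussianMatrix, complexGaussianMatrix,
    Measure.map_map hmeas measurable_matrix_of_re_im, ← hcoord.map_eq,
    Measure.map_map measurable_matrix_of_re_im hcoord.measurable]
  rfl

lemma integrable_norm_sq_complexGaussianMatrix (i : Fin N) (j : Fin K) :
    Integrable (fun G => ‖G i j‖ ^ 2) (complexGaussianMatrix N K v) := by
  have hsq (p : Fin N × Fin K × Bool) : Integrable (fun f : Fin N × Fin K × Bool → ℝ => f p ^ 2)
      (Measure.pi fun _ => gaussianReal 0 (v / 2)) :=
    (measurePreserving_eval (fun _ => gaussianReal 0 (v / 2)) p).integrable_comp_of_integrable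
      (memLp_id_gaussianReal (μ := 0) (v := v / 2) 2).integrable_sq
  have hcont : Continuous fun G : Matrix (Fin N) (Fin K) ℂ => ‖G i j‖ ^ 2 := by fun_prop
  rw [complexGaussianMatrix, integrable_map_measure hcont.aestronglyMeasurable
    measurable_matrix_of_re_im.aemeasurable]
  refine ((hsq (i, j, false)).add (hsq (i, j, true))).congr (ae_of_all _ fun f => ?_)
  simp [Complex.sq_norm, Complex.normSq_add_mul_I]

end Gaussian

/-- For `θ > 0` and `K' < K`, spreading the power `θ` over `K` i.i.d. Gaussian columns
yields at least the expected log-determinant obtained with `K'` columns: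
`E[log det(I_N + (θ/K) G G†)] ≥ E[log det(I_N + (θ/K') G' G'†)]`. -/
theorem expected_logdet_monotone_in_users (N K K' : ℕ) (hK' : 1 ≤ K') (hKK : K' < K)
    (θ : ℝ) (hθ : 0 < θ) :
    (∫ G, Real.log (Matrix.det (1 + ((θ / K : ℝ) : ℂ) • (G * Gᴴ))).re
        ∂(complexGaussianMatrix N K 1)) ≥
    ∫ G', Real.log (Matrix.det (1 + ((θ / K' : ℝ) : ℂ) • (G' * G'ᴴ))).re
        ∂(complexGaussianMatrix N K' 1) := by
  have : Nonempty (Fin K') := ⟨⟨0, hK'⟩⟩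
  simpa using expected_logdet_monotone_in_users_general
    (fun σ => measurePreserving_submatrix_complexGaussianMatrix 1 σ.injective)
    (integrable_norm_sq_complexGaussianMatrix (N := N) 1) (Fin.castLE_injective hKK.le)
    (measurePreserving_submatrix_complexGaussianMatrix 1 (Fin.castLE_injective hKK.le)) hθ.le
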